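/- Let E be a Banach space over 𝕂 (= ℝ or ℂ). The following are equivalent: (i) E' has the Littlewood–Orlicz property; (ii) for every Banach space X over 𝕂, every continuous bilinear form A : X × E → 𝕂 is absolutely (1;1,2)-summing. -/

import Mathlib

open scoped BigOperators NNReal ENNReal

universe u

/-- The weak `ℓ_r` norm of a finite family `(x_j)` in a normed space:
`sup_{‖φ‖ ≤ 1} (∑_j ‖φ(x_j)‖^r)^(1/r)`. -/
noncomputable def weakNorm (𝕜 : Type*) [RCLike 𝕜] {E : Type*} [NormedAddCommGroup E]
    [NormedSpace 𝕜 E] (r : ℝ) {m : ℕ} (x : Fin m → E) : ℝ :=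
  ⨆ φ : {φ : E →L[𝕜] 𝕜 // ‖φ‖ ≤ 1}, (∑ j, ‖φ.1 (x j)‖ ^ r) ^ (1 / r)

/-- A Banach space `X` has the Littlewood–Orlicz property: `ℓ₁ʷ(X)` embeds continuously into
`ℓ₂ ⊗_π X = ℓ₂⟨X⟩`, expressed through the Bu–Diestel duality characterization:
`∑_j |ψ_j(x_j)| ≤ C ‖(x_j)‖_{ℓ₁ʷ(X)} ‖(ψ_j)‖_{ℓ₂ʷ(X')}` for all finite families. -/
def LittlewoodOrlicz (𝕜 : Type*) [RCLike 𝕜] (X : Type*) [NormedAddCommGroup X]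
    [NormedSpace 𝕜 X] : Prop :=
  ∃ C > 0, ∀ (m : ℕ) (x : Fin m → X) (ψ : Fin m → (X →L[𝕜] 𝕜)),
    ∑ j, ‖ψ j (x j)‖ ≤ C * weakNorm 𝕜 1 x * weakNorm 𝕜 2 ψ

section Helpers

variable {𝕜 : Type*} [RCLike 𝕜] {E : Type*} [NormedAddCommGroup E] [NormedSpace 𝕜 E]

lemma wn_nonneg (r : ℝ) {m : ℕ} (x : Fin m → E) : 0 ≤ weakNorm 𝕜 r x :=
  Real.iSup_nonneg fun _ => by positivity

lemma wn_bdd {r : ℝ} (hr : 0 < r) {m : ℕ} (x : Fin m → E) :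
    BddAbove (Set.range fun φ : {φ : E →L[𝕜] 𝕜 // ‖φ‖ ≤ 1} =>
      (∑ j, ‖φ.1 (x j)‖ ^ r) ^ (1 / r)) := by
  refine ⟨(∑ j, ‖x j‖ ^ r) ^ (1 / r), ?_⟩
  rintro _ ⟨φ, rfl⟩
  have : ∀ j, ‖φ.1 (x j)‖ ≤ ‖x j‖ := fun j => by
    simpa using φ.1.le_of_opNorm_le φ.2 (x j)
  dsimp only
  gcongr with j _
  exact this j

lemma wn_apply_le {r : ℝ} (hr : 0 < r) {m : ℕ} (x : Fin m → E) (φ : E →L[𝕜] 𝕜) :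
    (∑ j, ‖φ (x j)‖ ^ r) ^ (1 / r) ≤ ‖φ‖ * weakNorm 𝕜 r x := by
  rcases eq_or_ne φ 0 with rfl | hφ
  · simp [Real.zero_rpow hr.ne', Real.zero_rpow (inv_ne_zero hr.ne')]
  have hpos : 0 < ‖φ‖ := norm_pos_iff.2 hφ
  have hn : ‖((‖φ‖⁻¹ : ℝ) : 𝕜) • φ‖ ≤ 1 := by
    rw [norm_smul]; simp [hpos.ne']
  have h := le_ciSup (wn_bdd (𝕜 := 𝕜) hr x) ⟨_, hn⟩
  have e : (∑ j, ‖φ (x j)‖ ^ r) ^ (1 / r) =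
      ‖φ‖ * (∑ j, ‖(((‖φ‖⁻¹ : ℝ) : 𝕜) • φ) (x j)‖ ^ r) ^ (1 / r) := by
    have : ∀ j, ‖(((‖φ‖⁻¹ : ℝ) : 𝕜) • φ) (x j)‖ ^ r = (‖φ‖⁻¹) ^ r * ‖φ (x j)‖ ^ r := fun j => by
      rw [smul_apply, norm_smul, Real.mul_rpow (norm_nonneg _) (norm_nonneg _)]
      simp
    simp_rw [this]
    rw [← Finset.mul_sum, Real.mul_rpow (by positivity) (by positivity),
      ← Real.rpow_mul (by positivity), mul_one_div_cancel hr.ne', Real.rpow_one, ← mul_assoc,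
      mul_inv_cancel₀ hpos.ne', one_mul]
  rw [e]
  exact mul_le_mul_of_nonneg_left h hpos.le

lemma wn_comp_le {F : Type*} [NormedAddCommGroup F] [NormedSpace 𝕜 F]
    {r : ℝ} (hr : 0 < r) {m : ℕ} (x : Fin m → E) (T : E →L[𝕜] F) :
    weakNorm 𝕜 r (fun j => T (x j)) ≤ ‖T‖ * weakNorm 𝕜 r x := by
  have : Nonempty {φ : F →L[𝕜] 𝕜 // ‖φ‖ ≤ 1} := ⟨⟨0, by simp⟩⟩
  refine ciSup_le fun φ => ?_
  refine (wn_apply_le hr x (φ.1.comp T)).trans ?_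
  have h1 : ‖φ.1.comp T‖ ≤ ‖T‖ := by
    refine (φ.1.opNorm_comp_le T).trans ?_
    exact mul_le_of_le_one_left (norm_nonneg _) φ.2
  exact mul_le_mul_of_nonneg_right h1 (wn_nonneg _ _)

/-- The synthesis operator `h ↦ ∑ h_j y_j`. -/
noncomputable def synth {m : ℕ} (y : Fin m → E) : EuclideanSpace 𝕜 (Fin m) →L[𝕜] E :=
  ∑ j, (EuclideanSpace.proj j : EuclideanSpace 𝕜 (Fin m) →L[𝕜] 𝕜).smulRight (y j)

lemma synth_apply {m : ℕ} (y : Fin m → E) (h : EuclideanSpace 𝕜 (Fin m)) :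
    synth y h = ∑ j, h j • y j := by
  simp [synth]

lemma rpow_two_half {m : ℕ} (a : Fin m → ℝ) :
    (∑ j, a j ^ (2 : ℝ)) ^ (1 / (2 : ℝ)) = √(∑ j, a j ^ 2) := by
  rw [Real.sqrt_eq_rpow]; simp

lemma wn_le_synth {m : ℕ} (y : Fin m → E) :
    weakNorm 𝕜 2 y ≤ ‖(synth y : EuclideanSpace 𝕜 (Fin m) →L[𝕜] E)‖ := by
  have : Nonempty {φ : E →L[𝕜] 𝕜 // ‖φ‖ ≤ 1} := ⟨⟨0, by simp⟩⟩
  refine ciSup_le fun φ => ?_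
  rw [rpow_two_half]
  set S := ∑ j, ‖φ.1 (y j)‖ ^ 2 with hS
  have hS0 : 0 ≤ S := by positivity
  let h : EuclideanSpace 𝕜 (Fin m) := WithLp.toLp 2 fun j => star (φ.1 (y j))
  have hh : ‖h‖ = √S := by
    rw [EuclideanSpace.norm_eq]; simp [h, hS]
  have h1 : φ.1 (synth y h) = (S : 𝕜) := by
    rw [synth_apply, map_sum, hS]
    push_cast
    refine Finset.sum_congr rfl fun j _ => ?_
    simp [h, RCLike.conj_mul]
  have h2 : S ≤ ‖(synth y : EuclideanSpace 𝕜 (Fin m) →L[𝕜] E)‖ * √S := by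
    calc S = ‖φ.1 (synth y h)‖ := by rw [h1]; simp [abs_of_nonneg hS0]
      _ ≤ ‖synth y h‖ := by simpa using φ.1.le_of_opNorm_le φ.2 (synth y h)
      _ ≤ _ := by rw [← hh]; exact ContinuousLinearMap.le_opNorm (synth (𝕜 := 𝕜) y) h
  rcases hS0.eq_or_lt with h0 | h0
  · rw [← h0]; simp
  · have hp : 0 < √S := Real.sqrt_pos.2 h0
    refine le_of_mul_le_mul_right ?_ hp
    rwa [Real.mul_self_sqrt hS0]

lemma synth_le_wn {m : ℕ} (y : Fin m → E) (h : EuclideanSpace 𝕜 (Fin m)) (hh : ‖h‖ ≤ 1) :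
    ‖synth y h‖ ≤ weakNorm 𝕜 2 y := by
  obtain ⟨φ, hφ, he⟩ := exists_dual_vector'' 𝕜 (synth y h)
  have h1 := wn_apply_le (r := 2) two_pos y φ
  rw [rpow_two_half] at h1
  have h2 : ‖synth y h‖ = ‖φ (synth y h)‖ := by rw [he]; simp
  rw [h2, synth_apply, map_sum]
  calc ‖∑ j, φ (h j • y j)‖ ≤ ∑ j, ‖h j‖ * ‖φ (y j)‖ := by
        refine (norm_sum_le _ _).trans (Finset.sum_le_sum fun j _ => ?_)
        simp
    _ ≤ √(∑ j, ‖h j‖ ^ 2) * √(∑ j, ‖φ (y j)‖ ^ 2) := Real.sum_mul_le_sqrt_mul_sqrt _ _ _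
    _ = ‖h‖ * √(∑ j, ‖φ (y j)‖ ^ 2) := by rw [EuclideanSpace.norm_eq]
    _ ≤ 1 * √(∑ j, ‖φ (y j)‖ ^ 2) := by gcongr
    _ ≤ ‖φ‖ * weakNorm 𝕜 2 y := by rw [one_mul]; exact h1
    _ ≤ weakNorm 𝕜 2 y := mul_le_of_le_one_left (wn_nonneg _ _) hφ

/-- The dual of a finite sup-product is an `ℓ₁`-sum (the inequality we need). -/
lemma sum_norm_le_pi {ι : Type*} [Fintype ι] [DecidableEq ι] (g : (ι → E) →L[𝕜] 𝕜)
    (e : ι → (E →L[𝕜] 𝕜)) (hg : ∀ v, g v = ∑ i, e i (v i)) : ∑ i, ‖e i‖ ≤ ‖g‖ := by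
  refine le_of_forall_pos_le_add fun ε hε => ?_
  have key : ∀ i, ∃ v : E, ‖v‖ ≤ 1 ∧ ‖e i‖ - ε / (Fintype.card ι + 1) ≤ ‖e i v‖ := fun i => by
    obtain ⟨v, hv, h⟩ := (e i).exists_lt_apply_of_lt_opNorm
      (r := ‖e i‖ - ε / (Fintype.card ι + 1)) (by have : 0 < ε / (Fintype.card ι + 1) := by positivity
                                                  linarith)
    exact ⟨v, hv.le, h.le⟩
  choose v hv hev using key
  choose c hc hce using fun i => RCLike.exists_norm_eq_mul_self (e i (v i))
  have h1 : g (fun i => c i • v i) = ((∑ i, ‖e i (v i)‖ : ℝ) : 𝕜) := by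
    rw [hg]; push_cast
    exact Finset.sum_congr rfl fun i _ => by
      rw [map_smul, smul_eq_mul]; exact (hce i).symm
  have h2 : ‖(fun i => c i • v i)‖ ≤ 1 := by
    refine (pi_norm_le_iff_of_nonneg zero_le_one).2 fun i => ?_
    rw [norm_smul, hc, one_mul]; exact hv i
  have h3 : ∑ i, ‖e i (v i)‖ ≤ ‖g‖ := by
    have := g.le_of_opNorm_le_of_le le_rfl h2
    rw [h1, mul_one, RCLike.norm_ofReal, abs_of_nonneg (by positivity)] at this
    exact this
  have h4 : ∑ i, (‖e i‖ - ε / (Fintype.card ι + 1)) ≤ ‖g‖ :=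
    (Finset.sum_le_sum fun i _ => hev i).trans h3
  rw [Finset.sum_sub_distrib, Finset.sum_const, Finset.card_univ, nsmul_eq_mul] at h4
  have h5 : (Fintype.card ι : ℝ) * (ε / (Fintype.card ι + 1)) ≤ ε := by
    rw [← mul_div_assoc, div_le_iff₀ (by positivity)]
    nlinarith
  linarith

/-- A finite net controls the operator norm on `ℓ₂^m`. -/
lemma exists_net (𝕜 : Type*) [RCLike 𝕜] (m : ℕ) : ∃ N : Finset (EuclideanSpace 𝕜 (Fin m)),
    (∀ h ∈ N, ‖h‖ ≤ 1) ∧ ∀ h : EuclideanSpace 𝕜 (Fin m), ‖h‖ ≤ 1 → ∃ k ∈ N, ‖h - k‖ ≤ 1 / 2 := by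
  have hc : IsCompact (Metric.closedBall (0 : EuclideanSpace 𝕜 (Fin m)) 1) := by
    have : ProperSpace (EuclideanSpace 𝕜 (Fin m)) := FiniteDimensional.proper 𝕜 _
    exact isCompact_closedBall _ _
  obtain ⟨t, ht, hf, hcov⟩ := hc.finite_cover_balls (e := 1 / 2) (by norm_num)
  refine ⟨hf.toFinset, fun h hh => by simpa using ht (hf.mem_toFinset.1 hh), fun h hh => ?_⟩
  have := hcov (show h ∈ Metric.closedBall _ _ by simpa using hh)
  simp only [Set.mem_iUnion] at this
  obtain ⟨k, hk, hb⟩ := this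
  exact ⟨k, hf.mem_toFinset.2 hk, by rw [← dist_eq_norm]; exact (Metric.mem_ball.1 hb).le⟩

lemma net_bound {H : Type*} [NormedAddCommGroup H] [NormedSpace 𝕜 H] {N : Finset H}
    (hN : ∀ h : H, ‖h‖ ≤ 1 → ∃ k ∈ N, ‖h - k‖ ≤ 1 / 2) (T : H →L[𝕜] E) {M : ℝ}
    (hM : ∀ k ∈ N, ‖T k‖ ≤ M) : ‖T‖ ≤ 2 * M := by
  have : ‖T‖ ≤ M + 1 / 2 * ‖T‖ := by
    refine le_of_forall_lt fun r hr => ?_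
    obtain ⟨h, hh, hlt⟩ := T.exists_lt_apply_of_lt_opNorm hr
    obtain ⟨k, hk, hd⟩ := hN h hh.le
    refine hlt.trans_le ?_
    have e : T h = T k + T (h - k) := by rw [map_sub]; abel
    rw [e]
    refine (norm_add_le _ _).trans (add_le_add (hM k hk) ?_)
    rw [mul_comm]; exact T.le_of_opNorm_le_of_le le_rfl hd
  linarith

/-- Dualisation step: an estimate on `E` passes to the bidual. -/
lemma bidual_step {m : ℕ} (u : Fin m → (E →L[𝕜] 𝕜)) (s : ℝ) (hs : 0 ≤ s)
    (hu : ∀ y : Fin m → E, ‖∑ j, u j (y j)‖ ≤ s * weakNorm 𝕜 2 y)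
    (ψ : Fin m → ((E →L[𝕜] 𝕜) →L[𝕜] 𝕜)) :
    ‖∑ j, ψ j (u j)‖ ≤ 2 * s * weakNorm 𝕜 2 ψ := by
  classical
  obtain ⟨N, hN1, hN⟩ := exists_net 𝕜 m
  let R : (Fin m → E) →ₗ[𝕜] (N → E) :=
    LinearMap.pi fun k => ∑ j, (k.1 j) • LinearMap.proj j
  have hR : ∀ y k, R y k = synth y k.1 := fun y k => by
    simp [R, synth_apply, LinearMap.sum_apply]
  let U : (Fin m → E) →ₗ[𝕜] 𝕜 := ∑ j, (u j).toLinearMap ∘ₗ LinearMap.proj j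
  have hU : ∀ y, U y = ∑ j, u j (y j) := fun y => by
    simp [U, LinearMap.sum_apply]
  have hnet : ∀ y : Fin m → E, ‖(synth y : EuclideanSpace 𝕜 (Fin m) →L[𝕜] E)‖ ≤ 2 * ‖R y‖ :=
    fun y => net_bound hN _ fun k hk => by
      rw [← hR y ⟨k, hk⟩]; exact norm_le_pi_norm _ _
  have hUR : ∀ y, ‖U y‖ ≤ 2 * s * ‖R y‖ := fun y => by
    rw [hU]
    refine (hu y).trans ?_
    have := (wn_le_synth (𝕜 := 𝕜) y).trans (hnet y)
    nlinarith
  have hker : LinearMap.ker R ≤ LinearMap.ker U := fun y hy => by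
    rw [LinearMap.mem_ker] at hy ⊢
    have := hUR y
    rw [hy] at this
    simpa using this
  let f0 : LinearMap.range R →ₗ[𝕜] 𝕜 :=
    ((LinearMap.ker R).liftQ U hker) ∘ₗ R.quotKerEquivRange.symm.toLinearMap
  have hf0 : ∀ y, f0 ⟨R y, y, rfl⟩ = U y := fun y => by
    have : R.quotKerEquivRange.symm ⟨R y, y, rfl⟩ = (LinearMap.ker R).mkQ y := by
      rw [LinearEquiv.symm_apply_eq]
      ext1; simp
    simp [f0, this]
  let f : LinearMap.range R →L[𝕜] 𝕜 := f0.mkContinuous (2 * s) (by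
    rintro ⟨_, y, rfl⟩
    rw [hf0]; exact hUR y)
  obtain ⟨g, hgf, hgn⟩ := exists_extension_norm_eq (LinearMap.range R) f
  have hgle : ‖g‖ ≤ 2 * s := by
    rw [hgn]; exact LinearMap.mkContinuous_norm_le _ (by positivity) _
  have hgR : ∀ y, g (R y) = U y := fun y => by
    rw [← hf0]; exact hgf ⟨R y, y, rfl⟩
  let e : N → (E →L[𝕜] 𝕜) := fun k => g.comp (ContinuousLinearMap.single 𝕜 (fun _ => E) k)
  have hge : ∀ v, g v = ∑ k, e k (v k) := fun v => by
    conv_lhs => rw [← Finset.univ_sum_single v]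
    rw [map_sum]; rfl
  have hsum := (sum_norm_le_pi g e hge).trans hgle
  have hue : ∀ j, u j = ∑ k, (k.1 j) • e k := fun j => by
    ext x
    have h1 := hgR (Pi.single j x)
    rw [hU, hge, Finset.sum_eq_single j (fun i _ hi => by simp [hi]) (by simp)] at h1
    rw [Pi.single_eq_same] at h1
    rw [← h1, sum_apply]
    refine Finset.sum_congr rfl fun k _ => ?_
    rw [hR, synth_apply, Finset.sum_eq_single j (fun i _ hi => by simp [hi]) (by simp)]
    simp
  have hfin : ∑ j, ψ j (u j) = ∑ k : N, (synth ψ k.1) (e k) := by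
    simp_rw [synth_apply, sum_apply]
    rw [Finset.sum_comm]
    refine Finset.sum_congr rfl fun j _ => ?_
    rw [hue j, map_sum]
    simp
  rw [hfin]
  calc ‖∑ k : N, (synth ψ k.1) (e k)‖ ≤ ∑ k : N, weakNorm 𝕜 2 ψ * ‖e k‖ := by
        refine (norm_sum_le _ _).trans (Finset.sum_le_sum fun k _ => ?_)
        exact ContinuousLinearMap.le_of_opNorm_le _ (synth_le_wn ψ k.1 (hN1 _ k.2)) _
    _ = (∑ k : N, ‖e k‖) * weakNorm 𝕜 2 ψ := by rw [← Finset.mul_sum, mul_comm]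
    _ ≤ _ := mul_le_mul_of_nonneg_right hsum (wn_nonneg _ _)

end Helpers

/-- `E'` has the Littlewood–Orlicz property iff for every Banach space `X`, every continuous
bilinear form on `X × E` is absolutely `(1; 1, 2)`-summing. -/
theorem littlewood_orlicz_iff {𝕜 : Type u} [RCLike 𝕜]
    (E : Type u) [NormedAddCommGroup E] [NormedSpace 𝕜 E] [CompleteSpace E] :
    LittlewoodOrlicz 𝕜 (E →L[𝕜] 𝕜) ↔
      ∀ (X : Type u) [NormedAddCommGroup X] [NormedSpace 𝕜 X] [CompleteSpace X],
        ∀ A : X →L[𝕜] E →L[𝕜] 𝕜, ∃ C > 0,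
          ∀ (m : ℕ) (x : Fin m → X) (y : Fin m → E),
            ∑ j, ‖A (x j) (y j)‖ ≤ C * weakNorm 𝕜 1 x * weakNorm 𝕜 2 y := by
  constructor
  · rintro ⟨C, hC, H⟩ X _ _ _ A
    refine ⟨C * (‖A‖ + 1), by positivity, fun m x y => ?_⟩
    have h := H m (fun j => A (x j)) (fun j => NormedSpace.inclusionInDoubleDual 𝕜 E (y j))
    have h1 := wn_comp_le (𝕜 := 𝕜) one_pos x A
    have h2 := wn_comp_le (𝕜 := 𝕜) (F := (E →L[𝕜] 𝕜) →L[𝕜] 𝕜) two_pos y (NormedSpace.inclusionInDoubleDual 𝕜 E)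
    have h3 : weakNorm 𝕜 2 (fun j => NormedSpace.inclusionInDoubleDual 𝕜 E (y j))
        ≤ weakNorm 𝕜 2 y :=
      h2.trans (mul_le_of_le_one_left (wn_nonneg _ _)
        (NormedSpace.inclusionInDoubleDual_norm_le 𝕜 E))
    have h4 : weakNorm 𝕜 1 (fun j => A (x j)) ≤ (‖A‖ + 1) * weakNorm 𝕜 1 x :=
      h1.trans (mul_le_mul_of_nonneg_right (by linarith) (wn_nonneg _ _))
    calc ∑ j, ‖A (x j) (y j)‖ ≤ C * weakNorm 𝕜 1 (fun j => A (x j)) *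
          weakNorm 𝕜 2 (fun j => NormedSpace.inclusionInDoubleDual 𝕜 E (y j)) := by
            simpa using h
      _ ≤ C * ((‖A‖ + 1) * weakNorm 𝕜 1 x) * weakNorm 𝕜 2 y := by
          have p1 := wn_nonneg (𝕜 := 𝕜) 1 x
          refine mul_le_mul (mul_le_mul_of_nonneg_left h4 hC.le) h3 (wn_nonneg _ _) ?_
          positivity
      _ = _ := by ring
  · intro H
    obtain ⟨C, hC, H⟩ := H (E →L[𝕜] 𝕜) (ContinuousLinearMap.id 𝕜 (E →L[𝕜] 𝕜))
    refine ⟨2 * C, by positivity, fun m x ψ => ?_⟩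
    choose c hc hce using fun j => RCLike.exists_norm_eq_mul_self (ψ j (x j))
    have p1 := wn_nonneg (𝕜 := 𝕜) 1 x
    have h := bidual_step (fun j => c j • x j) (C * weakNorm 𝕜 1 x) (by positivity) (fun y => by
      refine (norm_sum_le _ _).trans (le_trans (le_of_eq ?_) (H m x y))
      refine Finset.sum_congr rfl fun j _ => ?_
      simp [hc]) ψ
    have e : ∑ j, ψ j (c j • x j) = ((∑ j, ‖ψ j (x j)‖ : ℝ) : 𝕜) := by
      push_cast
      exact Finset.sum_congr rfl fun j _ => by
        rw [map_smul, smul_eq_mul]; exact (hce j).symm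
    rw [e, RCLike.norm_ofReal, abs_of_nonneg (by positivity)] at h
    linarith
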